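/- Let (Ω, μ) be a probability space on a standard Borel space, Y₀, Y₁ : Ω → ℝ measurable with |Y₀| ≤ M and |Y₁| ≤ M almost surely for some M > 0, and D, T : Ω → {0,1} measurable with (Y₀, Y₁) conditionally independent of D given the σ-algebra generated by T. Let Y := Y₁·1{D = 1} + Y₀·1{D = 0}, and suppose there is κ ∈ (0, 1/2) with κ ≤ p(t) ≤ 1 − κ for t ∈ {0,1}, where p(t) := μ(D = 1, T = t)/μ(T = t) (taking μ(T = t) > 0). Set β_t := E[(Y₁ − Y₀)·1{T = t}] and c := E[Y₀], and define W : [0,1]² → ℝ by W(x,y) = β₁x + β₀y + c if x > y; W(x,y) = (β₁+β₀)x + c if x = y; W(x,y) = β₁y + β₀x + c if x < y. For a sample of size n, on the product space (Ωⁿ, μ^⊗n) define for each t ∈ {0,1} the estimator β̂_t := (1/n)·Σ_{i=1}^n [ Y⁽ⁱ⁾·1{D⁽ⁱ⁾ = 1, T⁽ⁱ⁾ = t}/p(t) − Y⁽ⁱ⁾·1{D⁽ⁱ⁾ = 0, T⁽ⁱ⁾ = t}/(1 − p(t)) ], where (Y⁽ⁱ⁾, D⁽ⁱ⁾, T⁽ⁱ⁾)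 are the i-th coordinate copies, and let δ̂ := d(β̂₁, β̂₀) where d(b₁, b₀) = (1,0) if b₁ > 0 and b₀ < 0; (1,1) if (b₁ ≤ 0 or b₀ ≥ 0) and b₁ + b₀ > 0; (0,0) otherwise. Then for n ≥ κ^{−2}: E_{μ^⊗n}[ max_{(x,y) ∈ [0,1]²} W(x,y) − W(δ̂) ] ≤ 2·e^{−1/2}·M/(κ·√n). -/

import Mathlib

open MeasureTheory ProbabilityTheory

/-!
The score `V = Y₁ 1{D = 1} / p(T) - Y₀ 1{D = 0} / (1 - p(T))` is bounded by `M / κ`, and conditional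
independence makes its integral over `{T = t}` equal to `β_t`. The welfare of `(x, y)` is affine in
`(max x y, min x y)`, which ranges over the triangle with vertices `(0, 0)`, `(1, 0)`, `(1, 1)`, so
both the optimal rule and its plug-in version are maximisers over these three vertices: the
true value of a vertex `a` is `E[a(T) V] + c`, its estimated value the sample mean of `a(T) V` plus
`c`. The plug-in rule picks a vertex with gap `δ` only if the sample mean of a difference with mean
`-δ`, bounded by `M / κ`, is nonnegative. By Hoeffding's inequality this costs at most
`δ exp (-n δ² κ² / (2 M²)) ≤ e^{-1/2} M / (κ √n)` in expectation, and there are at most two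
suboptimal vertices.
-/

section FiberConditioning

variable {Ω γ : Type*} {mΩ : MeasurableSpace Ω} {μ : Measure Ω}

lemma measureReal_cond {s : Set Ω} (hs : MeasurableSet s) (u : Set Ω) :
    μ[|s].real u = (μ (u ∩ s)).toReal / (μ s).toReal := by
  rw [measureReal_def, cond_apply hs, ENNReal.toReal_mul, ENNReal.toReal_inv, Set.inter_comm,
    inv_mul_eq_div]

variable [IsFiniteMeasure μ]

lemma measureReal_mul_integral_cond (s : Set Ω) (F : Ω → ℝ) :
    μ.real s * ∫ ω, F ω ∂μ[|s] = ∫ ω in s, F ω ∂μ := by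
  rw [← measure_smul_setAverage F (measure_ne_top μ s), setAverage_eq', smul_eq_mul,
    ProbabilityTheory.cond]

lemma condExp_comap_ae_eq_integral_cond [mγ : MeasurableSpace γ] [MeasurableSingletonClass γ]
    {k : Ω → γ} (hk : Measurable k) {F : Ω → ℝ} (hF : Integrable F μ) (t : γ) :
    ∀ᵐ ω ∂μ.restrict (k ⁻¹' {t}), μ[F | mγ.comap k] ω = ∫ x, F x ∂μ[|k ⁻¹' {t}] := by
  have hkt : MeasurableSet (k ⁻¹' {t}) := hk (measurableSet_singleton t)
  by_cases h0 : μ (k ⁻¹' {t}) = 0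
  · simp only [Measure.restrict_eq_zero.mpr h0, ae_zero, Filter.eventually_bot]
  obtain ⟨a, -, ha⟩ := (stronglyMeasurable_condExp (f := F) (μ := μ)
    (m := mγ.comap k)).exists_eq_measurable_comp
  have hat {ω} (hω : ω ∈ k ⁻¹' {t}) : μ[F | mγ.comap k] ω = a t := by
    rw [ha, Function.comp_apply, show k ω = t from hω]
  have hint : μ.real (k ⁻¹' {t}) * a t = μ.real (k ⁻¹' {t}) * ∫ x, F x ∂μ[|k ⁻¹' {t}] := calc
    _ = ∫ ω in k ⁻¹' {t}, μ[F | mγ.comap k] ω ∂μ := by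
      rw [setIntegral_congr_fun hkt fun _ => hat, setIntegral_const, smul_eq_mul]
    _ = ∫ ω in k ⁻¹' {t}, F ω ∂μ :=
      setIntegral_condExp hk.comap_le hF ⟨{t}, measurableSet_singleton t, rfl⟩
    _ = _ := (measureReal_mul_integral_cond _ F).symm
  filter_upwards [ae_restrict_mem hkt] with ω hω
  rw [hat hω, mul_left_cancel₀ (by rwa [measureReal_ne_zero_iff]) hint]

lemma indepFun_cond_of_condIndepFun {α β : Type*} [StandardBorelSpace Ω] [MeasurableSpace α]
    [MeasurableSpace β] [mγ : MeasurableSpace γ] [MeasurableSingletonClass γ]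
    {f : Ω → α} {g : Ω → β} {k : Ω → γ} (hf : Measurable f) (hg : Measurable g)
    (hk : Measurable k) (h : CondIndepFun (mγ.comap k) hk.comap_le f g μ) (t : γ) :
    IndepFun f g μ[|k ⁻¹' {t}] := by
  rw [indepFun_iff_measure_inter_preimage_eq_mul]
  intro s u hs hu
  by_cases h0 : μ (k ⁻¹' {t}) = 0
  · simp [cond_eq_zero_of_meas_eq_zero h0]
  have hcondProb {v : Set Ω} (hv : MeasurableSet v) :
      ∀ᵐ ω ∂μ.restrict (k ⁻¹' {t}), (μ⟦v | mγ.comap k⟧) ω = μ[|k ⁻¹' {t}].real v := by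
    filter_upwards [condExp_comap_ae_eq_integral_cond hk
      ((integrable_const (1 : ℝ)).indicator hv) t] with ω hω
    rw [hω, integral_indicator_const _ hv, smul_eq_mul, mul_one]
  have : (ae (μ.restrict (k ⁻¹' {t}))).NeBot := ae_restrict_neBot.mpr h0
  obtain ⟨ω, hω, hfg, hf', hg'⟩ := ((ae_restrict_of_ae
    ((condIndepFun_iff_condExp_inter_preimage_eq_mul hf hg).mp h s u hs hu)).and
    ((hcondProb ((hf hs).inter (hg hu))).and
      ((hcondProb (hf hs)).and (hcondProb (hg hu))))).exists
  simp only [hfg, hf', hg'] at hω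
  rwa [← ENNReal.toReal_eq_toReal_iff' (by finiteness) (by finiteness), ENNReal.toReal_mul]

lemma setIntegral_inter_preimage_eq_mul {α : Type*} [MeasurableSpace α] {s : Set Ω} {F : Ω → ℝ}
    {g : Ω → α} (hF : Measurable F) (hg : Measurable g) (hFg : IndepFun F g μ[|s])
    {u : Set α} (hu : MeasurableSet u) :
    ∫ ω in s ∩ g ⁻¹' u, F ω ∂μ = μ[|s].real (g ⁻¹' u) * ∫ ω in s, F ω ∂μ := by
  have hmul : ∫ ω in g ⁻¹' u, F ω ∂μ[|s] = μ[|s].real (g ⁻¹' u) * ∫ ω, F ω ∂μ[|s] :=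
    Indep.setIntegral_eq_mul hg.comap_le (f := id) ((IndepFun_iff_Indep _ _ _).mp hFg).symm
      hF.aemeasurable ⟨u, hu, rfl⟩ aestronglyMeasurable_id
  rw [← setIntegral_indicator (hg hu), ← measureReal_mul_integral_cond,
    integral_indicator (hg hu), hmul, ← measureReal_mul_integral_cond s F]
  ring

end FiberConditioning

section FiberDecomposition

variable {Ω γ : Type*}

lemma comp_mul_eq_sum_mul_indicator [Fintype γ] (a : γ → ℝ) (T : Ω → γ) (F : Ω → ℝ) (ω : Ω) :
    a (T ω) * F ω = ∑ t, a t * (T ⁻¹' {t}).indicator F ω := by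
  rw [Finset.sum_eq_single (T ω) (fun t _ ht => by simp [ht.symm]) (by simp),
    Set.indicator_of_mem (show ω ∈ T ⁻¹' {T ω} from rfl)]

variable [MeasurableSpace Ω] {μ : Measure Ω}

lemma integral_comp_mul_eq_sum [Fintype γ] [MeasurableSpace γ] [MeasurableSingletonClass γ]
    (a : γ → ℝ) {T : Ω → γ} (hT : Measurable T) {F : Ω → ℝ} (hF : Integrable F μ) :
    ∫ ω, a (T ω) * F ω ∂μ = ∑ t, a t * ∫ ω in T ⁻¹' {t}, F ω ∂μ := by
  have hfiber (t : γ) : MeasurableSet (T ⁻¹' {t}) := hT (measurableSet_singleton t)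
  simp only [comp_mul_eq_sum_mul_indicator]
  rw [integral_finsetSum _ fun t _ => (hF.indicator (hfiber t)).const_mul (a t)]
  simp only [integral_const_mul, integral_indicator (hfiber _)]

lemma integral_mul_ite_eq_setIntegral [DecidableEq γ] {T : Ω → γ} {t : γ}
    (hTt : MeasurableSet (T ⁻¹' {t})) (F : Ω → ℝ) :
    ∫ ω, F ω * (if T ω = t then 1 else 0) ∂μ = ∫ ω in T ⁻¹' {t}, F ω ∂μ := by
  rw [← integral_indicator hTt]
  congr with ω
  by_cases ht : T ω = t <;> simp [ht]

end FiberDecomposition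

section Hoeffding

lemma mul_exp_neg_sq_half_le (s : ℝ) :
    s * Real.exp (-(s ^ 2 / 2)) ≤ Real.exp (-(1 / 2)) := by
  have hs : s ≤ Real.exp ((s ^ 2 - 1) / 2) := by
    nlinarith [Real.add_one_le_exp ((s ^ 2 - 1) / 2), sq_nonneg (s - 1)]
  calc s * Real.exp (-(s ^ 2 / 2))
      ≤ Real.exp ((s ^ 2 - 1) / 2) * Real.exp (-(s ^ 2 / 2)) := by gcongr
    _ = Real.exp (-(1 / 2)) := by rw [← Real.exp_add]; ring_nf

lemma mul_measureReal_le_sum_le_of_iIndepFun {Ω ι : Type*} [MeasurableSpace Ω] {μ : Measure Ω}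
    {X : ι → Ω → ℝ} (hindep : iIndepFun X μ) {s : Finset ι} (hs : s.Nonempty) {c : NNReal}
    (hc : 0 < c) (hX : ∀ i ∈ s, HasSubgaussianMGF (X i) c μ) {δ : ℝ} (hδ : 0 ≤ δ) :
    δ * μ.real {ω | s.card * δ ≤ ∑ i ∈ s, X i ω}
      ≤ Real.exp (-(1 / 2)) * Real.sqrt (c / s.card) := by
  have hcard : (0 : ℝ) < s.card := by exact_mod_cast hs.card_pos
  have hc' : (0 : ℝ) < c := hc
  set r := Real.sqrt (c / s.card)
  have hr : 0 < r := Real.sqrt_pos.mpr (div_pos hc' hcard)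
  have hr2 : r ^ 2 = c / s.card := Real.sq_sqrt (div_pos hc' hcard).le
  have htail : μ.real {ω | s.card * δ ≤ ∑ i ∈ s, X i ω} ≤ Real.exp (-((δ / r) ^ 2 / 2)) := by
    refine (HasSubgaussianMGF.measure_sum_ge_le_of_iIndepFun hindep hX
      (by positivity)).trans_eq ?_
    rw [div_pow, hr2, Finset.sum_const, nsmul_eq_mul]
    push_cast
    field_simp
  calc δ * μ.real {ω | s.card * δ ≤ ∑ i ∈ s, X i ω}
      ≤ δ * Real.exp (-((δ / r) ^ 2 / 2)) := by gcongr
    _ = δ / r * Real.exp (-((δ / r) ^ 2 / 2)) * r := by field_simp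
    _ ≤ Real.exp (-(1 / 2)) * r := by gcongr; exact mul_exp_neg_sq_half_le _

variable {Ω : Type*} [MeasurableSpace Ω] {μ : Measure Ω} [IsProbabilityMeasure μ]

lemma neg_integral_mul_measureReal_pi_sum_nonneg_le {Z : Ω → ℝ} (hZ : Measurable Z) {a b : ℝ}
    (hab : a < b) (hZab : ∀ᵐ ω ∂μ, Z ω ∈ Set.Icc a b) (hmean : ∫ ω, Z ω ∂μ ≤ 0) {n : ℕ}
    (hn : 0 < n) :
    -(∫ ω, Z ω ∂μ) * (Measure.pi fun _ : Fin n => μ).real {ω | 0 ≤ ∑ i, Z (ω i)}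
      ≤ Real.exp (-(1 / 2)) * ((b - a) / 2 / Real.sqrt n) := by
  set m := ∫ ω, Z ω ∂μ
  have hcentered : HasSubgaussianMGF (fun ω => Z ω - m) ((‖b - a‖₊ / 2) ^ 2) μ :=
    hasSubgaussianMGF_of_mem_Icc hZ.aemeasurable hZab
  have hcoord (i : Fin n) : HasSubgaussianMGF (fun ω : Fin n → Ω => Z (ω i) - m)
      ((‖b - a‖₊ / 2) ^ 2) (Measure.pi fun _ => μ) := by
    refine HasSubgaussianMGF.of_map (Y := fun ω : Fin n → Ω => ω i) (X := fun ω => Z ω - m)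
      (measurable_pi_apply i).aemeasurable ?_
    rwa [(measurePreserving_eval (fun _ : Fin n => μ) i).map_eq]
  have hindep : iIndepFun (fun (i : Fin n) (ω : Fin n → Ω) => Z (ω i) - m)
      (Measure.pi fun _ => μ) :=
    iIndepFun_pi (X := fun _ ω => Z ω - m) fun _ => by fun_prop
  have hne : (Finset.univ : Finset (Fin n)).Nonempty := ⟨⟨0, hn⟩, Finset.mem_univ _⟩
  have hscale : 0 < (‖b - a‖₊ / 2) ^ 2 := by
    have : 0 < ‖b - a‖₊ := nnnorm_pos.mpr (sub_pos.mpr hab).ne'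
    positivity
  have hbound := mul_measureReal_le_sum_le_of_iIndepFun hindep hne hscale
    (fun i _ => hcoord i) (neg_nonneg.mpr hmean)
  have hevent : {ω : Fin n → Ω | n * -m ≤ ∑ i, (Z (ω i) - m)} = {ω | 0 ≤ ∑ i, Z (ω i)} := by
    ext ω
    simp [Finset.sum_sub_distrib]
  have hwidth : ‖b - a‖ = b - a := Real.norm_of_nonneg (sub_pos.mpr hab).le
  rw [Finset.card_univ, Fintype.card_fin, hevent, Real.sqrt_div (NNReal.coe_nonneg _)] at hbound
  push_cast at hbound
  rwa [hwidth, Real.sqrt_sq (by linarith)] at hbound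

end Hoeffding

section EmpiricalMaximization

variable {Ω ι : Type*} [MeasurableSpace Ω] [Fintype ι]

lemma integral_regret_le_sum_mul_measureReal [DecidableEq ι] {P : Measure Ω} [IsFiniteMeasure P]
    {G : ι → ℝ} {best : ι} (hbest : ∀ j, G j ≤ G best) {sel : Ω → ι} {A : ι → Set Ω}
    (hA : ∀ j, MeasurableSet (A j)) (hsel : ∀ ω, sel ω ≠ best → ω ∈ A (sel ω)) :
    ∫ ω, (G best - G (sel ω)) ∂P ≤ ∑ j ∈ Finset.univ.erase best, (G best - G j) * P.real (A j) := by
  have hnonneg (j ω) : 0 ≤ (A j).indicator (fun _ => G best - G j) ω :=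
    Set.indicator_nonneg (fun _ _ => sub_nonneg.mpr (hbest j)) ω
  have hint (j) : Integrable ((A j).indicator fun _ => G best - G j) P :=
    (integrable_const _).indicator (hA j)
  have hpoint (ω) : G best - G (sel ω)
      ≤ ∑ j ∈ Finset.univ.erase best, (A j).indicator (fun _ => G best - G j) ω := by
    by_cases hs : sel ω = best
    · rw [hs, sub_self]
      exact Finset.sum_nonneg fun j _ => hnonneg j ω
    · rw [← Set.indicator_of_mem (hsel ω hs) fun _ => G best - G (sel ω)]
      exact Finset.single_le_sum (f := fun j => (A j).indicator (fun _ => G best - G j) ω)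
        (fun j _ => hnonneg j ω) (Finset.mem_erase.mpr ⟨hs, Finset.mem_univ _⟩)
  calc ∫ ω, (G best - G (sel ω)) ∂P
      ≤ ∫ ω, ∑ j ∈ Finset.univ.erase best, (A j).indicator (fun _ => G best - G j) ω ∂P :=
        integral_mono_of_nonneg (.of_forall fun ω => sub_nonneg.mpr (hbest _))
          (integrable_finsetSum _ fun j _ => hint j) (.of_forall hpoint)
    _ = _ := by
        rw [integral_finsetSum _ fun j _ => hint j]
        simp only [integral_indicator_const _ (hA _), smul_eq_mul, mul_comm]

lemma integral_empirical_argmax_regret_le {μ : Measure Ω} [IsProbabilityMeasure μ]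
    {H : ι → Ω → ℝ} (hH : ∀ j, Measurable (H j)) (hint : ∀ j, Integrable (H j) μ) {B : ℝ}
    (hB : 0 < B) (hHB : ∀ j k, ∀ᵐ ω ∂μ, |H j ω - H k ω| ≤ B) {n : ℕ} (hn : 0 < n)
    {sel : (Fin n → Ω) → ι} (hsel : ∀ ω j, ∑ i, H j (ω i) ≤ ∑ i, H (sel ω) (ω i))
    {best : ι} (hbest : ∀ j, ∫ ω, H j ω ∂μ ≤ ∫ ω, H best ω ∂μ) :
    ∫ ω, ((∫ x, H best x ∂μ) - ∫ x, H (sel ω) x ∂μ) ∂(Measure.pi fun _ : Fin n => μ)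
      ≤ ((Fintype.card ι : ℝ) - 1) * (Real.exp (-(1 / 2)) * (B / Real.sqrt n)) := by
  classical
  let A (j : ι) : Set (Fin n → Ω) := {ω | 0 ≤ ∑ i, (H j (ω i) - H best (ω i))}
  have hA (j) : MeasurableSet (A j) := by
    have := hH
    exact measurableSet_le measurable_const (by fun_prop)
  have hterm (j) : ((∫ x, H best x ∂μ) - ∫ x, H j x ∂μ)
      * (Measure.pi fun _ : Fin n => μ).real (A j)
        ≤ Real.exp (-(1 / 2)) * (B / Real.sqrt n) := by
    have hmean : ∫ ω, (H j ω - H best ω) ∂μ = (∫ x, H j x ∂μ) - ∫ x, H best x ∂μ :=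
      integral_sub (hint j) (hint best)
    have hhoeffding := neg_integral_mul_measureReal_pi_sum_nonneg_le ((hH j).sub (hH best))
      (neg_lt_self hB) ((hHB j best).mono fun _ => abs_le.mp)
      (hmean.trans_le (sub_nonpos.mpr (hbest j))) hn
    simp only [Pi.sub_apply] at hhoeffding
    rwa [hmean, neg_sub, sub_neg_eq_add, add_self_div_two] at hhoeffding
  calc ∫ ω, ((∫ x, H best x ∂μ) - ∫ x, H (sel ω) x ∂μ) ∂(Measure.pi fun _ : Fin n => μ)
      ≤ ∑ j ∈ Finset.univ.erase best, ((∫ x, H best x ∂μ) - ∫ x, H j x ∂μ)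
          * (Measure.pi fun _ : Fin n => μ).real (A j) :=
        integral_regret_le_sum_mul_measureReal (G := fun j => ∫ x, H j x ∂μ) hbest hA
          fun ω _ => by simpa [A, Finset.sum_sub_distrib] using hsel ω best
    _ ≤ ∑ _j ∈ Finset.univ.erase best, Real.exp (-(1 / 2)) * (B / Real.sqrt n) :=
        Finset.sum_le_sum fun j _ => hterm j
    _ = _ := by
        rw [Finset.sum_const, Finset.card_erase_of_mem (Finset.mem_univ _), Finset.card_univ,
          nsmul_eq_mul, Nat.cast_sub (Fintype.card_pos_iff.mpr ⟨best⟩), Nat.cast_one]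

lemma integral_empirical_policy_regret_le {γ : Type*} [Fintype γ] [MeasurableSpace γ]
    [MeasurableSingletonClass γ] {μ : Measure Ω} [IsProbabilityMeasure μ] {T : Ω → γ}
    (hT : Measurable T) {V : Ω → ℝ} (hV : Measurable V) {B : ℝ} (hB : 0 < B)
    (hVB : ∀ᵐ ω ∂μ, |V ω| ≤ B) {a : ι → γ → ℝ} (ha : ∀ j k t, |a j t - a k t| ≤ 1)
    {n : ℕ} (hn : 0 < n) {sel : (Fin n → Ω) → ι}
    (hsel : ∀ ω j, ∑ t, a j t * (1 / n * ∑ i, (T ⁻¹' {t}).indicator V (ω i))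
      ≤ ∑ t, a (sel ω) t * (1 / n * ∑ i, (T ⁻¹' {t}).indicator V (ω i)))
    {best : ι} (hbest : ∀ j, ∑ t, a j t * ∫ ω in T ⁻¹' {t}, V ω ∂μ
      ≤ ∑ t, a best t * ∫ ω in T ⁻¹' {t}, V ω ∂μ) :
    ∫ ω, ((∑ t, a best t * ∫ x in T ⁻¹' {t}, V x ∂μ)
        - ∑ t, a (sel ω) t * ∫ x in T ⁻¹' {t}, V x ∂μ) ∂(Measure.pi fun _ : Fin n => μ)
      ≤ ((Fintype.card ι : ℝ) - 1) * (Real.exp (-(1 / 2)) * (B / Real.sqrt n)) := by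
  have hVint : Integrable V μ := .of_bound hV.aestronglyMeasurable B hVB
  have hmeas (j) : Measurable fun ω => a j (T ω) * V ω :=
    ((measurable_of_finite (a j)).comp hT).mul hV
  have hint (j) : Integrable (fun ω => a j (T ω) * V ω) μ := by
    simp only [comp_mul_eq_sum_mul_indicator]
    exact integrable_finsetSum _ fun t _ =>
      (hVint.indicator (hT (measurableSet_singleton t))).const_mul _
  have hdiff (j k) : ∀ᵐ ω ∂μ, |a j (T ω) * V ω - a k (T ω) * V ω| ≤ B := by
    filter_upwards [hVB] with ω hω
    rw [← sub_mul, abs_mul]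
    exact (mul_le_of_le_one_left (abs_nonneg _) (ha j k _)).trans hω
  have hsample (j) (ω : Fin n → Ω) :
      ∑ t, a j t * (1 / n * ∑ i, (T ⁻¹' {t}).indicator V (ω i))
        = 1 / n * ∑ i, a j (T (ω i)) * V (ω i) := by
    simp only [comp_mul_eq_sum_mul_indicator, Finset.sum_comm (s := Finset.univ (α := Fin n)),
      Finset.mul_sum, mul_left_comm]
  have hn' : (0 : ℝ) < 1 / n := by positivity
  simp only [hsample, mul_le_mul_iff_right₀ hn'] at hsel
  simp only [← integral_comp_mul_eq_sum _ hT hVint] at hbest ⊢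
  exact integral_empirical_argmax_regret_le hmeas hint hB hdiff hn hsel hbest

end EmpiricalMaximization

section InverseProbabilityWeighting

variable {Ω γ : Type*} {Y0 Y1 : Ω → ℝ} {D : Ω → Fin 2} {T : Ω → γ} {p : γ → ℝ}

/-- The signed inverse-propensity-weighted outcome, whose integral over `{T = t}` identifies the
treatment effect there. Only the potential outcome that is observed enters. -/
noncomputable def ipwScore (Y0 Y1 : Ω → ℝ) (D : Ω → Fin 2) (T : Ω → γ) (p : γ → ℝ) (ω : Ω) : ℝ :=
  if D ω = 1 then Y1 ω / p (T ω) else -(Y0 ω / (1 - p (T ω)))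

lemma indicator_ipwScore_eq [DecidableEq γ] {Y : Ω → ℝ}
    (hY : ∀ ω, Y ω = Y1 ω * (if D ω = 1 then 1 else 0) + Y0 ω * (if D ω = 0 then 1 else 0))
    (t : γ) (ω : Ω) :
    (T ⁻¹' {t}).indicator (ipwScore Y0 Y1 D T p) ω
      = Y ω * (if D ω = 1 ∧ T ω = t then 1 else 0) / p t
        - Y ω * (if D ω = 0 ∧ T ω = t then 1 else 0) / (1 - p t) := by
  by_cases ht : T ω = t
  · obtain hD0 | hD1 : D ω = 0 ∨ D ω = 1 := by omega
    · simp [ipwScore, hY, hD0, ht]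
    · simp [ipwScore, hY, hD1, ht]
  · simp [ht]

lemma abs_ipwScore_le {M κ : ℝ} (hκ : 0 < κ) (hp : ∀ t, κ ≤ p t ∧ p t ≤ 1 - κ) {ω : Ω}
    (hY0 : |Y0 ω| ≤ M) (hY1 : |Y1 ω| ≤ M) : |ipwScore Y0 Y1 D T p ω| ≤ M / κ := by
  have hM : 0 ≤ M := (abs_nonneg _).trans hY0
  have hp0 : κ ≤ p (T ω) := (hp _).1
  have hp1 : κ ≤ 1 - p (T ω) := by linarith [(hp (T ω)).2]
  unfold ipwScore
  split_ifs
  · rw [abs_div, abs_of_pos (hκ.trans_le hp0)]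
    gcongr
  · rw [abs_neg, abs_div, abs_of_pos (hκ.trans_le hp1)]
    gcongr

variable [MeasurableSpace Ω] [mγ : MeasurableSpace γ] [MeasurableSingletonClass γ]

lemma measurable_ipwScore [Finite γ] (hY0 : Measurable Y0) (hY1 : Measurable Y1)
    (hD : Measurable D) (hT : Measurable T) : Measurable (ipwScore Y0 Y1 D T p) := by
  have hpT : Measurable fun ω => p (T ω) := (measurable_of_finite p).comp hT
  exact Measurable.ite (hD (measurableSet_singleton 1)) (hY1.div hpT)
    (hY0.div (hpT.const_sub 1)).neg

lemma setIntegral_ipwScore [StandardBorelSpace Ω] {μ : Measure Ω} [IsFiniteMeasure μ]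
    (hY0 : Measurable Y0) (hY1 : Measurable Y1) (hY0i : Integrable Y0 μ) (hY1i : Integrable Y1 μ)
    (hD : Measurable D) (hT : Measurable T)
    (hCI : CondIndepFun (mγ.comap T) hT.comap_le (fun ω => (Y0 ω, Y1 ω)) D μ) {t : γ}
    (hp : p t = μ[|T ⁻¹' {t}].real (D ⁻¹' {1})) (hp0 : 0 < p t) (hp1 : p t < 1) :
    ∫ ω in T ⁻¹' {t}, ipwScore Y0 Y1 D T p ω ∂μ = ∫ ω in T ⁻¹' {t}, (Y1 ω - Y0 ω) ∂μ := by
  have hTt : MeasurableSet (T ⁻¹' {t}) := hT (measurableSet_singleton t)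
  have hD1 : MeasurableSet (D ⁻¹' {1}) := hD (measurableSet_singleton 1)
  have hD0 : MeasurableSet (D ⁻¹' {0}) := hD (measurableSet_singleton 0)
  have hnull : μ (T ⁻¹' {t}) ≠ 0 := fun h => by
    simp [hp, cond_eq_zero_of_meas_eq_zero h] at hp0
  have : IsProbabilityMeasure μ[|T ⁻¹' {t}] := cond_isProbabilityMeasure hnull
  have hcontrol : μ[|T ⁻¹' {t}].real (D ⁻¹' {0}) = 1 - p t := by
    rw [hp, ← probReal_compl_eq_one_sub hD1]
    congr 1
    ext ω
    simp only [Set.mem_preimage, Set.mem_singleton_iff, Set.mem_compl_iff]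
    omega
  have hindep := indepFun_cond_of_condIndepFun (hY0.prodMk hY1) hD hT hCI t
  have hscore : ∀ ω ∈ T ⁻¹' {t}, ipwScore Y0 Y1 D T p ω
      = (D ⁻¹' {1}).indicator Y1 ω / p t - (D ⁻¹' {0}).indicator Y0 ω / (1 - p t) := by
    rintro ω rfl
    obtain h | h : D ω = 0 ∨ D ω = 1 := by omega
    · simp [ipwScore, h]
    · simp [ipwScore, h]
  rw [setIntegral_congr_fun hTt hscore,
    integral_sub ((hY1i.indicator hD1).integrableOn.div_const _)
      ((hY0i.indicator hD0).integrableOn.div_const _),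
    integral_div, integral_div, setIntegral_indicator hD1, setIntegral_indicator hD0,
    setIntegral_inter_preimage_eq_mul hY1 hD (hindep.comp measurable_snd measurable_id)
      (measurableSet_singleton 1),
    setIntegral_inter_preimage_eq_mul hY0 hD (hindep.comp measurable_fst measurable_id)
      (measurableSet_singleton 0),
    ← hp, hcontrol, mul_div_cancel_left₀ _ hp0.ne', mul_div_cancel_left₀ _ (sub_pos.mpr hp1).ne',
    integral_sub hY1i.integrableOn hY0i.integrableOn]

end InverseProbabilityWeighting

section Welfare

/-- Welfare of the rule that treats stated type `1` with probability `x` and stated type `0` with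
probability `y`: misreporting pays off when `x < y` and exchanges the two probabilities. -/
noncomputable def statedWelfare (b : Fin 2 → ℝ) (c x y : ℝ) : ℝ :=
  if x > y then b 1 * x + b 0 * y + c
  else if x = y then (b 1 + b 0) * x + c
  else b 1 * y + b 0 * x + c

/-- The plug-in rule, as the pair of treatment probabilities of stated types `1` and `0`. -/
noncomputable def plugInRule (b₁ b₀ : ℝ) : ℝ × ℝ :=
  if b₁ > 0 ∧ b₀ < 0 then (1, 0)
  else if (b₁ ≤ 0 ∨ b₀ ≥ 0) ∧ b₁ + b₀ > 0 then (1, 1)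
  else (0, 0)

/-- The vertices of the triangle of truthful rules; `truthfulVertex j t` is the probability
with which the `j`-th vertex treats type `t`. -/
def truthfulVertex : Fin 3 → Fin 2 → ℝ := ![![0, 0], ![0, 1], ![1, 1]]

/-- The index in `truthfulVertex` of the rule that `plugInRule` selects. -/
noncomputable def plugInVertex (b : Fin 2 → ℝ) : Fin 3 :=
  if b 1 > 0 ∧ b 0 < 0 then 1 else if (b 1 ≤ 0 ∨ b 0 ≥ 0) ∧ b 1 + b 0 > 0 then 2 else 0

variable (b : Fin 2 → ℝ) (c : ℝ)

lemma plugInRule_eq_truthfulVertex : plugInRule (b 1) (b 0)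
    = (truthfulVertex (plugInVertex b) 1, truthfulVertex (plugInVertex b) 0) := by
  unfold plugInRule plugInVertex
  split_ifs <;> rfl

lemma abs_truthfulVertex_sub_le (j k : Fin 3) (t : Fin 2) :
    |truthfulVertex j t - truthfulVertex k t| ≤ 1 := by
  fin_cases j <;> fin_cases k <;> fin_cases t <;> simp [truthfulVertex]

lemma sum_truthfulVertex_mul_le (j : Fin 3) :
    ∑ t, truthfulVertex j t * b t ≤ ∑ t, truthfulVertex (plugInVertex b) t * b t := by
  unfold plugInVertex
  split_ifs <;> fin_cases j <;> simp [truthfulVertex] <;> grind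

lemma statedWelfare_eq_max_min (x y : ℝ) :
    statedWelfare b c x y = b 1 * max x y + b 0 * min x y + c := by
  unfold statedWelfare
  split_ifs with hgt heq
  · rw [max_eq_left hgt.le, min_eq_right hgt.le]
  · rw [heq, max_self, min_self]
    ring
  · rw [max_eq_right (not_lt.mp hgt), min_eq_left (not_lt.mp hgt)]

lemma statedWelfare_truthfulVertex (j : Fin 3) :
    statedWelfare b c (truthfulVertex j 1) (truthfulVertex j 0)
      = ∑ t, truthfulVertex j t * b t + c := by
  rw [statedWelfare_eq_max_min]
  fin_cases j <;> simp [truthfulVertex, add_comm]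

lemma mul_add_mul_le_sum_truthfulVertex {u v : ℝ} (hv : 0 ≤ v) (hvu : v ≤ u) (hu : u ≤ 1) :
    b 1 * u + b 0 * v ≤ ∑ t, truthfulVertex (plugInVertex b) t * b t := by
  have : 0 ≤ 1 - u := sub_nonneg.mpr hu
  have : 0 ≤ u - v := sub_nonneg.mpr hvu
  calc b 1 * u + b 0 * v
      = (1 - u) * ∑ t, truthfulVertex 0 t * b t + (u - v) * ∑ t, truthfulVertex 1 t * b t
          + v * ∑ t, truthfulVertex 2 t * b t := by
        simp only [truthfulVertex, Fin.sum_univ_two, Matrix.cons_val]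
        ring
    _ ≤ (1 - u) * ∑ t, truthfulVertex (plugInVertex b) t * b t
          + (u - v) * ∑ t, truthfulVertex (plugInVertex b) t * b t
          + v * ∑ t, truthfulVertex (plugInVertex b) t * b t := by
        gcongr ?_ * ?_ + ?_ * ?_ + ?_ * ?_ <;> exact sum_truthfulVertex_mul_le b _
    _ = ∑ t, truthfulVertex (plugInVertex b) t * b t := by ring

lemma isGreatest_statedWelfare :
    IsGreatest {w : ℝ | ∃ x ∈ Set.Icc (0 : ℝ) 1, ∃ y ∈ Set.Icc (0 : ℝ) 1,
      statedWelfare b c x y = w} (∑ t, truthfulVertex (plugInVertex b) t * b t + c) := by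
  have hmem (j t) : truthfulVertex j t ∈ Set.Icc (0 : ℝ) 1 := by
    fin_cases j <;> fin_cases t <;> simp [truthfulVertex]
  refine ⟨⟨_, hmem _ 1, _, hmem _ 0, statedWelfare_truthfulVertex b c _⟩, ?_⟩
  rintro _ ⟨x, ⟨hx0, hx1⟩, y, ⟨hy0, hy1⟩, rfl⟩
  rw [statedWelfare_eq_max_min]
  gcongr
  exact mul_add_mul_le_sum_truthfulVertex b (le_min hx0 hy0) min_le_max (max_le hx1 hy1)

lemma integral_sSup_statedWelfare_sub_plugInRule_le {Ω : Type*} [MeasurableSpace Ω] {μ : Measure Ω}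
    [IsProbabilityMeasure μ] {T : Ω → Fin 2} (hT : Measurable T) {V : Ω → ℝ} (hV : Measurable V)
    {B : ℝ} (hB : 0 < B) (hVB : ∀ᵐ ω ∂μ, |V ω| ≤ B) (hb : ∀ t, ∫ ω in T ⁻¹' {t}, V ω ∂μ = b t)
    {n : ℕ} (hn : 0 < n) {bhat : Fin 2 → (Fin n → Ω) → ℝ}
    (hbhat : ∀ t ω, bhat t ω = 1 / n * ∑ i, (T ⁻¹' {t}).indicator V (ω i)) :
    ∫ ω, (sSup {w : ℝ | ∃ x ∈ Set.Icc (0 : ℝ) 1, ∃ y ∈ Set.Icc (0 : ℝ) 1,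
          statedWelfare b c x y = w}
        - statedWelfare b c (plugInRule (bhat 1 ω) (bhat 0 ω)).1
          (plugInRule (bhat 1 ω) (bhat 0 ω)).2) ∂(Measure.pi fun _ : Fin n => μ)
      ≤ 2 * (Real.exp (-(1 / 2)) * (B / Real.sqrt n)) := by
  have hregret := integral_empirical_policy_regret_le hT hV hB hVB abs_truthfulVertex_sub_le hn
    (sel := fun ω => plugInVertex (bhat · ω)) (best := plugInVertex b)
    (fun ω j => by simpa only [← hbhat] using sum_truthfulVertex_mul_le (bhat · ω) j)
    (fun j => by simpa only [hb] using sum_truthfulVertex_mul_le b j)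
  simp only [hb] at hregret
  calc _ = _ := by
        simp only [(isGreatest_statedWelfare b c).csSup_eq,
          fun ω => plugInRule_eq_truthfulVertex (bhat · ω), statedWelfare_truthfulVertex,
          add_sub_add_right_eq_sub]
    _ ≤ _ := hregret
    _ = _ := by norm_num

end Welfare

theorem stmt_18_general {Ω : Type*} [MeasurableSpace Ω] [StandardBorelSpace Ω]
    (μ : Measure Ω) [IsProbabilityMeasure μ]
    (Y0 Y1 : Ω → ℝ) (hY0m : Measurable Y0) (hY1m : Measurable Y1)
    (M : ℝ) (hM : 0 < M)
    (hY0b : ∀ᵐ ω ∂μ, |Y0 ω| ≤ M) (hY1b : ∀ᵐ ω ∂μ, |Y1 ω| ≤ M)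
    (D T : Ω → Fin 2) (hD : Measurable D) (hT : Measurable T)
    (hCI : CondIndepFun (MeasurableSpace.comap T ⊤) hT.comap_le
      (fun ω => (Y0 ω, Y1 ω)) D μ)
    (Y : Ω → ℝ)
    (hY : ∀ ω, Y ω = Y1 ω * (if D ω = 1 then 1 else 0) + Y0 ω * (if D ω = 0 then 1 else 0))
    (p : Fin 2 → ℝ)
    (hp : ∀ t, p t = (μ {ω | D ω = 1 ∧ T ω = t}).toReal / (μ {ω | T ω = t}).toReal)
    (κ : ℝ) (hκ : 0 < κ) (hκp : ∀ t, κ ≤ p t ∧ p t ≤ 1 - κ)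
    (β : Fin 2 → ℝ)
    (hβ : ∀ t, β t = ∫ ω, (Y1 ω - Y0 ω) * (if T ω = t then 1 else 0) ∂μ)
    (W : ℝ → ℝ → ℝ)
    (hW : ∀ x y, W x y =
      if x > y then β 1 * x + β 0 * y + ∫ ω, Y0 ω ∂μ
      else if x = y then (β 1 + β 0) * x + ∫ ω, Y0 ω ∂μ
      else β 1 * y + β 0 * x + ∫ ω, Y0 ω ∂μ)
    (n : ℕ) (hn : 0 < n)
    (βhat : Fin 2 → (Fin n → Ω) → ℝ)
    (hβhat : ∀ t ω, βhat t ω = (1 / (n : ℝ)) * ∑ i : Fin n,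
      (Y (ω i) * (if D (ω i) = 1 ∧ T (ω i) = t then 1 else 0) / p t
        - Y (ω i) * (if D (ω i) = 0 ∧ T (ω i) = t then 1 else 0) / (1 - p t)))
    (d : ℝ → ℝ → ℝ × ℝ)
    (hd : ∀ b₁ b₀, d b₁ b₀ =
      if b₁ > 0 ∧ b₀ < 0 then ((1 : ℝ), (0 : ℝ))
      else if (b₁ ≤ 0 ∨ b₀ ≥ 0) ∧ b₁ + b₀ > 0 then (1, 1)
      else (0, 0)) :
    ∫ ω, (sSup {w : ℝ | ∃ x ∈ Set.Icc (0 : ℝ) 1, ∃ y ∈ Set.Icc (0 : ℝ) 1, W x y = w}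
        - W (d (βhat 1 ω) (βhat 0 ω)).1 (d (βhat 1 ω) (βhat 0 ω)).2)
        ∂(Measure.pi fun _ : Fin n => μ)
      ≤ 2 * Real.exp (-(1 / 2)) * M / (κ * Real.sqrt n) := by
  obtain rfl : W = statedWelfare β (∫ ω, Y0 ω ∂μ) := funext₂ hW
  obtain rfl : d = plugInRule := funext₂ hd
  have heffect (t) : ∫ ω in T ⁻¹' {t}, ipwScore Y0 Y1 D T p ω ∂μ = β t := by
    have hTt : MeasurableSet (T ⁻¹' {t}) := hT (measurableSet_singleton t)
    rw [hβ, integral_mul_ite_eq_setIntegral hTt]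
    exact setIntegral_ipwScore hY0m hY1m (.of_bound hY0m.aestronglyMeasurable M hY0b)
      (.of_bound hY1m.aestronglyMeasurable M hY1b) hD hT hCI
      ((hp t).trans (measureReal_cond hTt _).symm)
      (hκ.trans_le (hκp t).1) (by linarith [(hκp t).2])
  have hestimate (t ω) : βhat t ω
      = 1 / n * ∑ i, (T ⁻¹' {t}).indicator (ipwScore Y0 Y1 D T p) (ω i) := by
    simp only [hβhat, indicator_ipwScore_eq hY]
  refine (integral_sSup_statedWelfare_sub_plugInRule_le β _ hT
    (measurable_ipwScore hY0m hY1m hD hT) (div_pos hM hκ)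
    (hY0b.mp (hY1b.mono fun ω h1 h0 => abs_ipwScore_le hκ hκp h0 h1))
    heffect hn hestimate).trans_eq ?_
  ring

/-- Proposition 2: Finite-sample maximum-regret bound for the
statistical treatment rule based on data from a strictly strategy-proof RCT:
for `n ≥ κ⁻²`, `E[max_{[0,1]²} W - W(δ̂)] ≤ 2 e^{-1/2} M / (κ √n)`. -/
theorem stmt_18 {Ω : Type*} [MeasurableSpace Ω] [StandardBorelSpace Ω] [Nonempty Ω]
    (μ : Measure Ω) [IsProbabilityMeasure μ]
    (Y0 Y1 : Ω → ℝ) (hY0m : Measurable Y0) (hY1m : Measurable Y1)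
    (M : ℝ) (hM : 0 < M)
    (hY0b : ∀ᵐ ω ∂μ, |Y0 ω| ≤ M) (hY1b : ∀ᵐ ω ∂μ, |Y1 ω| ≤ M)
    (D T : Ω → Fin 2) (hD : Measurable D) (hT : Measurable T)
    (hCI : CondIndepFun (MeasurableSpace.comap T ⊤) hT.comap_le
      (fun ω => (Y0 ω, Y1 ω)) D μ)
    (Y : Ω → ℝ)
    (hY : ∀ ω, Y ω = Y1 ω * (if D ω = 1 then 1 else 0) + Y0 ω * (if D ω = 0 then 1 else 0))
    (hTpos : ∀ t, 0 < μ {ω | T ω = t})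
    (p : Fin 2 → ℝ)
    (hp : ∀ t, p t = (μ {ω | D ω = 1 ∧ T ω = t}).toReal / (μ {ω | T ω = t}).toReal)
    (κ : ℝ) (hκ : κ ∈ Set.Ioo (0:ℝ) (1/2))
    (hκp : ∀ t, κ ≤ p t ∧ p t ≤ 1 - κ)
    (β : Fin 2 → ℝ)
    (hβ : ∀ t, β t = ∫ ω, (Y1 ω - Y0 ω) * (if T ω = t then 1 else 0) ∂μ)
    (c : ℝ) (hc : c = ∫ ω, Y0 ω ∂μ)
    (W : ℝ → ℝ → ℝ)
    (hW : ∀ x y, W x y =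
      if x > y then β 1 * x + β 0 * y + c
      else if x = y then (β 1 + β 0) * x + c
      else β 1 * y + β 0 * x + c)
    (n : ℕ) (hn : κ⁻¹ ^ 2 ≤ (n : ℝ))
    (βhat : Fin 2 → (Fin n → Ω) → ℝ)
    (hβhat : ∀ t ω, βhat t ω = (1 / (n : ℝ)) * ∑ i : Fin n,
      (Y (ω i) * (if D (ω i) = 1 ∧ T (ω i) = t then 1 else 0) / p t
        - Y (ω i) * (if D (ω i) = 0 ∧ T (ω i) = t then 1 else 0) / (1 - p t)))
    (d : ℝ → ℝ → ℝ × ℝ)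
    (hd : ∀ b₁ b₀, d b₁ b₀ =
      if b₁ > 0 ∧ b₀ < 0 then ((1:ℝ), (0:ℝ))
      else if (b₁ ≤ 0 ∨ b₀ ≥ 0) ∧ b₁ + b₀ > 0 then (1, 1)
      else (0, 0)) :
    ∫ ω, (sSup {w : ℝ | ∃ x ∈ Set.Icc (0:ℝ) 1, ∃ y ∈ Set.Icc (0:ℝ) 1, W x y = w}
        - W (d (βhat 1 ω) (βhat 0 ω)).1 (d (βhat 1 ω) (βhat 0 ω)).2)
        ∂(Measure.pi fun _ : Fin n => μ)
      ≤ 2 * Real.exp (-(1/2)) * M / (κ * Real.sqrt n) :=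
  stmt_18_general μ Y0 Y1 hY0m hY1m M hM hY0b hY1b D T hD hT hCI Y hY p hp κ hκ.1 hκp β hβ W
    (by simpa only [hc] using hW) n
    (Nat.cast_pos.mp ((pow_pos (inv_pos.mpr hκ.1) 2).trans_le hn)) βhat hβhat d hd
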